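/- If (T, <_T) is a tree of height and size ω₁, then the forcing notion (T, ≥_T) is proper for models of size ω₁. -/

import Mathlib

noncomputable section
namespace GuessingPaper

/- Framework: we work in Mathlib's model `ZFSet` of ZFC, viewed as the ground
model `V`.  A generic extension `V[G]` is represented via a (hypothetical)
`V`-generic filter `G : Set ZFSet`; subsets of ground-model sets belonging to
`V[G]` are represented as classes `x : Set ZFSet` of the form
`{y | ∃ p ∈ G, (y, p) ∈ A}` for some ground set `A` (this is exactly the class
of `G`-evaluations of `ℙ`-names for subsets of ground sets). -/



open FirstOrder

/-- `x` is a (von Neumann) ordinal. -/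
def IsOrd (x : ZFSet) : Prop := x.IsOrdinal

/-- `x` is countable. -/
def Ctble (x : ZFSet) : Prop := x.toSet.Countable

/-- iterated unions, for the transitive closure -/
def unions : ℕ → ZFSet → ZFSet
  | 0, x => x
  | n + 1, x => ZFSet.sUnion (unions n x)

/-- the transitive closure of `x` (as a class) -/
def tcl (x : ZFSet) : Set ZFSet := ⋃ n : ℕ, (unions n x).toSet

/-- `H_θ`: the class of sets hereditarily of cardinality `< θ`. -/
def HSet (θ : Cardinal) : Set ZFSet := {x | Cardinal.mk ↥(tcl x) < θ}

/-- `x` is a member of `ω₂`, i.e. an ordinal of cardinality `≤ ℵ₁`. -/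
def MemOmega2 (x : ZFSet) : Prop := IsOrd x ∧ Cardinal.mk ↥x.toSet ≤ Cardinal.aleph 1

/-- `M` has size `ω₁`. -/
def SizeOmega1 (M : ZFSet) : Prop := Cardinal.mk ↥M.toSet = Cardinal.aleph 1

/-- `𝒫_{ω₂}(H_θ)`: subsets of `H_θ` of size `< ω₂`. -/
def Pom2 (θ : Cardinal) : Set ZFSet :=
  {M | M.toSet ⊆ HSet θ ∧ Cardinal.mk ↥M.toSet < Cardinal.aleph 2}

/-- `ω₁ ⊆ M`: every countable ordinal belongs to `M`. -/
def Omega1Sub (M : ZFSet) : Prop := ∀ x, IsOrd x → Ctble x → x ∈ M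

/-- `M ∩ ω₂ ∈ ω₂`. -/
def CapOmega2 (M : ZFSet) : Prop :=
  ∃ δ, MemOmega2 δ ∧ ∀ x, MemOmega2 x → (x ∈ M ↔ x ∈ δ)

/-- the ∈-structure on a class of sets, in the language with one binary relation -/
def memStructure (S : Set ZFSet) : Language.order.Structure S :=
  @Language.orderStructure S ⟨fun x y => (x : ZFSet) ∈ (y : ZFSet)⟩

/-- `M ≺ N` : `M` is an elementary submodel of `N` (as ∈-structures). -/
def ElemSub (M N : Set ZFSet) : Prop :=
  M ⊆ N ∧ ∀ (k : ℕ) (φ : Language.order.Formula (Fin k)) (v : Fin k → ZFSet)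
    (hM : ∀ i, v i ∈ M) (hN : ∀ i, v i ∈ N),
    (@Language.Formula.Realize _ _ (memStructure M) _ φ (fun i => ⟨v i, hM i⟩)) ↔
    (@Language.Formula.Realize _ _ (memStructure N) _ φ (fun i => ⟨v i, hN i⟩))

/-! ### Guessing models (in `V`) -/

/-- `x` is bounded in `M`. -/
def BoundedIn (M x : ZFSet) : Prop := ∃ X, X ∈ M ∧ x ⊆ X

/-- `x` is `ω₁`-approximated in `M`. -/
def ApproxIn (M x : ZFSet) : Prop := ∀ a, a ∈ M → Ctble a → a ∩ x ∈ M

/-- `x` is guessed in `M`. -/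
def GuessedIn (M x : ZFSet) : Prop := ∃ y, y ∈ M ∧ y ∩ M = x ∩ M

/-- `M` is an `ω₁`-guessing set. -/
def IsGuessing (M : ZFSet) : Prop :=
  ∀ x : ZFSet, BoundedIn M x → (ApproxIn M x ↔ GuessedIn M x)



/-! ### Forcing -/

/-- `p ≤ q` in the order coded by the set of (Kuratowski) pairs `le`. -/
def Le (le p q : ZFSet) : Prop := ZFSet.pair p q ∈ le

/-- `(P, le)` is a forcing notion: `le` is a preorder on `P`, coded as a set of pairs. -/
def IsForcing (P le : ZFSet) : Prop :=
  (∀ x ∈ le, ∃ p ∈ P, ∃ q ∈ P, x = ZFSet.pair p q) ∧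
  (∀ p ∈ P, Le le p p) ∧
  (∀ p q r : ZFSet, Le le p q → Le le q r → Le le p r)

/-- `p` and `q` are compatible. -/
def Compat (P le p q : ZFSet) : Prop := ∃ r, r ∈ P ∧ Le le r p ∧ Le le r q

/-- `D` is a dense subset of the forcing `(P, le)`. -/
def DenseSub (P le D : ZFSet) : Prop := D ⊆ P ∧ ∀ p ∈ P, ∃ q ∈ D, Le le q p

/-- the class `D` is dense in `(P, le)`. -/
def DenseClass (P le : ZFSet) (D : Set ZFSet) : Prop :=
  (∀ p ∈ D, p ∈ P) ∧ ∀ p ∈ P, ∃ q ∈ D, Le le q p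

/-- the class `D` is predense below `p`. -/
def PredenseBelow (P le : ZFSet) (D : Set ZFSet) (p : ZFSet) : Prop :=
  ∀ r, r ∈ P → Le le r p → ∃ s ∈ D, Compat P le s r

/-- `q` is an `(M, ℙ)`-generic condition. -/
def MGenericCond (P le M q : ZFSet) : Prop :=
  ∀ D : ZFSet, DenseSub P le D → D ∈ M →
    PredenseBelow P le {s | s ∈ M ∧ s ∈ D} q

/-- `G` is a filter on `(P, le)`. -/
def IsVFilter (P le : ZFSet) (G : Set ZFSet) : Prop :=
  G.Nonempty ∧ (∀ p ∈ G, p ∈ P) ∧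
  (∀ p ∈ G, ∀ q, q ∈ P → Le le p q → q ∈ G) ∧
  (∀ p ∈ G, ∀ q ∈ G, ∃ r ∈ G, Le le r p ∧ Le le r q)

/-- `G` is a `V`-generic filter on `(P, le)`: it meets every dense subset
(all of which belong to the ambient universe `V`). -/
def VGeneric (P le : ZFSet) (G : Set ZFSet) : Prop :=
  IsVFilter P le G ∧ ∀ D : ZFSet, DenseSub P le D → ∃ p ∈ G, p ∈ D

/-- the class `x` is a set of the generic extension `V[G]` (as a subset of `V`):
it is the evaluation by `G` of a `ℙ`-name for a subset of a ground-model set. -/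
def InExt (G : Set ZFSet) (x : Set ZFSet) : Prop :=
  ∃ A : ZFSet, x = {y | ∃ p ∈ G, ZFSet.pair y p ∈ A}

/-- the class `x` is (coded by) a set of the ground model `V`. -/
def InV (x : Set ZFSet) : Prop := ∃ z : ZFSet, x = z.toSet

/-- evaluation of a `ℙ`-name `τ` by a filter `G`:
`val G τ = { val G σ ∣ ∃ p ∈ G, (σ, p) ∈ τ }` (by `∈`-recursion). -/
def val (G : Set ZFSet) : ZFSet → ZFSet :=
  (ZFSet.mem_wf.transGen).fix fun τ IH =>
    @ZFSet.image
      (fun σ => @dite ZFSet (Relation.TransGen (· ∈ ·) σ τ) (Classical.dec _)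
        (fun h => IH σ h) (fun _ => ∅))
      (Classical.allZFSetDefinable _)
      (ZFSet.sep (fun σ => ∃ p ∈ G, ZFSet.pair σ p ∈ τ)
        (ZFSet.sUnion (ZFSet.sUnion τ)))

/-- `M[G]`: the class of evaluations by `G` of names belonging to `M`. -/
def MExt (G : Set ZFSet) (M : ZFSet) : Set ZFSet := {x | ∃ τ, τ ∈ M ∧ val G τ = x}




/-! ### Notions of the generic extension `V[G]` -/

/-- `a` is countable in `V[G]`: there is an enumeration of `a` by `ω` in `V[G]`. -/
def CtbleExt (G : Set ZFSet) (a : ZFSet) : Prop :=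
  ∃ R : Set ZFSet, InExt G R ∧
    (∀ z ∈ R, ∃ n, n ∈ ZFSet.omega ∧ ∃ y, y ∈ a ∧ z = ZFSet.pair n y) ∧
    (∀ n y y', ZFSet.pair n y ∈ R → ZFSet.pair n y' ∈ R → y = y') ∧
    (∀ y, y ∈ a → ∃ n, n ∈ ZFSet.omega ∧ ZFSet.pair n y ∈ R)

/-- in `V[G]`, the set (coded by) `x` is `ω₁`-approximated in `M`. -/
def ApproxInExt (G : Set ZFSet) (M : ZFSet) (x : Set ZFSet) : Prop :=
  ∀ a, a ∈ M → CtbleExt G a → ∃ z, z ∈ M ∧ z.toSet = a.toSet ∩ x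

/-- the set (coded by) `x` is guessed in `M`. -/
def GuessedInExt (M : ZFSet) (x : Set ZFSet) : Prop :=
  ∃ y, y ∈ M ∧ y.toSet ∩ M.toSet = x ∩ M.toSet

/-- `M` is an `ω₁`-guessing set in the generic extension `V[G]`. -/
def GuessingInExt (G : Set ZFSet) (M : ZFSet) : Prop :=
  ∀ x : Set ZFSet, InExt G x → (∃ X, X ∈ M ∧ x ⊆ X.toSet) →
    (ApproxInExt G M x ↔ GuessedInExt M x)

/-- in `V[G]` there is a surjection from `ω` onto `ω₁^V` (i.e. `ω₁` is collapsed). -/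
def CollapsesOmega1 (G : Set ZFSet) : Prop :=
  ∃ R : Set ZFSet, InExt G R ∧
    (∀ n y y', ZFSet.pair n y ∈ R → ZFSet.pair n y' ∈ R → y = y') ∧
    (∀ x, IsOrd x → Ctble x → ∃ n, n ∈ ZFSet.omega ∧ ZFSet.pair n x ∈ R)

/-- in `V[G]` there is a surjection from an ordinal `< ω₂^V` onto `ω₂^V`. -/
def CollapsesOmega2 (G : Set ZFSet) : Prop :=
  ∃ δ : ZFSet, IsOrd δ ∧ Cardinal.mk ↥δ.toSet ≤ Cardinal.aleph 1 ∧
    ∃ R : Set ZFSet, InExt G R ∧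
      (∀ β y y', ZFSet.pair β y ∈ R → ZFSet.pair β y' ∈ R → y = y') ∧
      (∀ x, MemOmega2 x → ∃ β, β ∈ δ ∧ ZFSet.pair β x ∈ R)

/-- the class `x` has size `< ω₂` in `V[G]`: in `V[G]` it is the surjective image of an
ordinal of size `≤ ℵ₁`. -/
def LtOmega2Ext (G : Set ZFSet) (x : Set ZFSet) : Prop :=
  ∃ δ : ZFSet, IsOrd δ ∧ Cardinal.mk ↥δ.toSet ≤ Cardinal.aleph 1 ∧
    ∃ R : Set ZFSet, InExt G R ∧
      (∀ β y y', ZFSet.pair β y ∈ R → ZFSet.pair β y' ∈ R → y = y') ∧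
      (∀ y ∈ x, ∃ β, β ∈ δ ∧ ZFSet.pair β y ∈ R)


/-! ### Stationarity, properness, and the guessing-model principles -/

/-- `M` is closed under `F` (viewed as a function on finite subsets). -/
def ClosedUnderF (F : ZFSet → ZFSet) (M : ZFSet) : Prop :=
  ∀ a : ZFSet, a ⊆ M → a.toSet.Finite → F a ⊆ M

/-- `F` maps `𝒫_ω(H_θ)` into `𝒫_{ω₂}(H_θ)`. -/
def GoodF (θ : Cardinal) (F : ZFSet → ZFSet) : Prop :=
  ∀ a : ZFSet, a.toSet ⊆ HSet θ → a.toSet.Finite →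
    (F a).toSet ⊆ HSet θ ∧ Cardinal.mk ↥(F a).toSet < Cardinal.aleph 2

/-- `S` is stationary in `𝒫_{ω₂}(H_θ)`: every `F : 𝒫_ω(H_θ) → 𝒫_{ω₂}(H_θ)` has a closure
point `M ≺ H_θ` in `S` with `M ∩ ω₂ ∈ ω₂`. -/
def Stationary (θ : Cardinal) (S : Set ZFSet) : Prop :=
  ∀ F : ZFSet → ZFSet, GoodF θ F →
    ∃ M ∈ S, ElemSub M.toSet (HSet θ) ∧ CapOmega2 M ∧ ClosedUnderF F M

/-- the value `F(a)` of the function (of `V[G]`) coded by the relation `R`. -/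
def FExtVal (R : Set ZFSet) (a : ZFSet) : Set ZFSet := {y | ZFSet.pair a y ∈ R}

/-- the relation `R` codes a function `F : 𝒫_ω(H_θ^V) → 𝒫_{ω₂}(H_θ^V)` of `V[G]`. -/
def GoodFExt (G : Set ZFSet) (θ : Cardinal) (R : Set ZFSet) : Prop :=
  ∀ a : ZFSet, a.toSet ⊆ HSet θ → a.toSet.Finite →
    FExtVal R a ⊆ HSet θ ∧ LtOmega2Ext G (FExtVal R a)

/-- in `V[G]`, the set `S` (of the ground model) is stationary in `𝒫_{ω₂}(H_θ^V)`:
every function `F : 𝒫_ω(H_θ^V) → 𝒫_{ω₂}(H_θ^V)` belonging to `V[G]` has a closure point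
`M ≺ H_θ^V` in `S` with `M ∩ ω₂ ∈ ω₂`. -/
def StationaryExt (G : Set ZFSet) (θ : Cardinal) (S : Set ZFSet) : Prop :=
  ∀ R : Set ZFSet, InExt G R → GoodFExt G θ R →
    ∃ M ∈ S, ElemSub M.toSet (HSet θ) ∧ CapOmega2 M ∧
      ∀ a : ZFSet, a ⊆ M → a.toSet.Finite → FExtVal R a ⊆ M.toSet

/-- the forcing `(P, le)` is proper for the family `S` of models. -/
def ProperFor (P le : ZFSet) (S : Set ZFSet) : Prop :=
  ∀ M ∈ S, ∀ p, p ∈ M → p ∈ P → ∃ q, q ∈ P ∧ Le le q p ∧ MGenericCond P le M q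

/-- the forcing `(P, le)` is proper for models of size `ω₁`, i.e. for all
`M ≺ (H_θ, ∈, ℙ)` with `ω₁ ⊆ M` and `|M| = ω₁`, for every sufficiently large regular `θ`. -/
def ProperForSizeOmega1 (P le : ZFSet) : Prop :=
  ∃ θ₀ : Cardinal, ∀ θ : Cardinal, θ₀ ≤ θ → θ.IsRegular →
    ProperFor P le {M | ElemSub M.toSet (HSet θ) ∧ P ∈ M ∧ le ∈ M ∧
      Omega1Sub M ∧ SizeOmega1 M}

/-- the forcing `(P, le)` preserves `ω₁`. -/
def PreservesOmega1 (P le : ZFSet) : Prop :=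
  ∀ G : Set ZFSet, VGeneric P le G → ¬ CollapsesOmega1 G

/-- the forcing `(P, le)` preserves the cardinal `ω₂`. -/
def PreservesOmega2 (P le : ZFSet) : Prop :=
  ∀ G : Set ZFSet, VGeneric P le G → ¬ CollapsesOmega2 G

/-- the forcing `(P, le)` has the `ω₁`-approximation property. -/
def ApproxProp (P le : ZFSet) : Prop :=
  ∀ G : Set ZFSet, VGeneric P le G →
    ∀ x : Set ZFSet, InExt G x → (∃ X : ZFSet, x ⊆ X.toSet) →
      (∀ a : ZFSet, Ctble a → InV (a.toSet ∩ x)) → InV x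

/-- `GMP(ω₂)`: for every regular `θ ≥ ω₂`, the `ω₁`-guessing elementary submodels of `H_θ`
of size `ω₁` are stationary in `𝒫_{ω₂}(H_θ)`. -/
def GMP : Prop :=
  ∀ θ : Cardinal.{1}, Cardinal.aleph 2 ≤ θ → θ.IsRegular →
    Stationary θ {M | M ∈ Pom2 θ ∧ ElemSub M.toSet (HSet θ) ∧ SizeOmega1 M ∧ IsGuessing M}

/-- `M` is indestructibly `ω₁`-guessing: it is `ω₁`-guessing and remains so in any
generic extension by an `ω₁`-preserving forcing. -/
def IndestructiblyGuessing (M : ZFSet) : Prop :=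
  IsGuessing M ∧ ∀ P le : ZFSet, IsForcing P le → PreservesOmega1 P le →
    ∀ G : Set ZFSet, VGeneric P le G → GuessingInExt G M

/-- `IGMP(ω₂)`: for every regular `θ ≥ ω₂` there are stationarily many indestructibly
`ω₁`-guessing `M ∈ 𝒫_{ω₂}(H_θ)`. -/
def IGMP : Prop :=
  ∀ θ : Cardinal.{1}, Cardinal.aleph 2 ≤ θ → θ.IsRegular →
    Stationary θ {M | M ∈ Pom2 θ ∧ IndestructiblyGuessing M}

/-- `ℙ-IGMP(ω₂)`: for every sufficiently large regular `θ`, the `ω₁`-guessing sets of size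
`ω₁` that remain `ω₁`-guessing after forcing with `ℙ = (P, le)` are stationary in
`𝒫_{ω₂}(H_θ)`. -/
def PIGMP (P le : ZFSet) : Prop :=
  ∃ θ₀ : Cardinal, ∀ θ : Cardinal, θ₀ ≤ θ → θ.IsRegular →
    Stationary θ {M | M ∈ Pom2 θ ∧ SizeOmega1 M ∧ IsGuessing M ∧
      ∀ G : Set ZFSet, VGeneric P le G → GuessingInExt G M}

/-- `FA({ℙ}, ω₁)`: for every family of `ω₁`-many dense subsets of `ℙ = (P, le)` there is a
filter meeting all of them. -/
def FAomega1 (P le : ZFSet) : Prop :=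
  ∀ D : Set ZFSet, (∀ d ∈ D, DenseSub P le d) → Cardinal.mk ↥D ≤ Cardinal.aleph 1 →
    ∃ G : Set ZFSet, IsVFilter P le G ∧ ∀ d ∈ D, ∃ p ∈ G, p ∈ d



/-- `s <_T t` in the tree order coded by the set of pairs `lt`. -/
def Lt (lt s t : ZFSet) : Prop := ZFSet.pair s t ∈ lt

/-- `(T, lt)` is a tree: a strict partial order in which the predecessors of every node
are well-ordered. -/
def IsTree (T lt : ZFSet) : Prop :=
  (∀ x ∈ lt, ∃ s ∈ T, ∃ t ∈ T, x = ZFSet.pair s t) ∧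
  (∀ t ∈ T, ¬ Lt lt t t) ∧
  (∀ s t u : ZFSet, Lt lt s t → Lt lt t u → Lt lt s u) ∧
  (∀ t ∈ T, ∀ s, Lt lt s t → ∀ s', Lt lt s' t → s = s' ∨ Lt lt s s' ∨ Lt lt s' s) ∧
  (∀ t ∈ T, ∀ S : Set ZFSet, (∀ s ∈ S, Lt lt s t) → S.Nonempty →
    ∃ m ∈ S, ∀ s ∈ S, m = s ∨ Lt lt m s)

/-- `f` is an order isomorphism from the ordinal `α` onto the set of `lt`-predecessors
of `t`. -/
def IsoOntoPred (lt α t f : ZFSet) : Prop :=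
  (∀ z ∈ f, ∃ β, β ∈ α ∧ ∃ s, Lt lt s t ∧ z = ZFSet.pair β s) ∧
  (∀ β, β ∈ α → ∃ s, ZFSet.pair β s ∈ f) ∧
  (∀ β s s', ZFSet.pair β s ∈ f → ZFSet.pair β s' ∈ f → s = s') ∧
  (∀ s, Lt lt s t → ∃ β, β ∈ α ∧ ZFSet.pair β s ∈ f) ∧
  (∀ β β' s s', ZFSet.pair β s ∈ f → ZFSet.pair β' s' ∈ f → (β ∈ β' ↔ Lt lt s s'))

/-- the tree `(T, lt)` has height `ω₁`: every node has countably many predecessors, and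
every countable ordinal is the order type of the predecessors of some node. -/
def HeightOmega1 (T lt : ZFSet) : Prop :=
  (∀ t ∈ T, {s | Lt lt s t}.Countable) ∧
  (∀ α : ZFSet, IsOrd α → Ctble α → ∃ t ∈ T, ∃ f : ZFSet, IsoOntoPred lt α t f)

/-- the reversed tree order `≥_T` (the forcing order of `(T, ≥_T)`), as a set of pairs. -/
def revLe (T lt : ZFSet) : ZFSet :=
  ZFSet.sep
    (fun z => ∃ s, s ∈ T ∧ ∃ t, t ∈ T ∧ z = ZFSet.pair s t ∧ (s = t ∨ Lt lt t s))
    (ZFSet.powerset (ZFSet.powerset T))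

universe u

/-! ### Helper material -/

/-- uniformly first-order definable predicates (in the language of set theory) -/
def Df (R : (S : Set ZFSet.{u}) → (ℕ → S) → Prop) : Prop :=
  ∃ φ : Language.order.Formula ℕ, ∀ (S : Set ZFSet.{u}) (v : ℕ → S),
    (@Language.Formula.Realize _ _ (memStructure S) _ φ v) ↔ R S v

theorem Df.mem (i j : ℕ) : Df fun _ v => (v i : ZFSet.{u}) ∈ (v j : ZFSet.{u}) := by
  refine ⟨Language.Relations.formula₂ Language.leSymb (Language.Term.var i)
    (Language.Term.var j), fun S v => ?_⟩
  letI := memStructure S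
  rw [Language.Formula.realize_rel₂]
  exact Iff.rfl

theorem Df.eq (i j : ℕ) : Df.{u} fun _ v => v i = v j := by
  refine ⟨Language.Term.equal (Language.Term.var i) (Language.Term.var j), fun S v => ?_⟩
  letI := memStructure S
  simp [Language.Formula.realize_equal]

theorem Df.not {R : (S : Set ZFSet.{u}) → (ℕ → S) → Prop} (h : Df R) :
    Df fun S v => ¬ R S v := by
  obtain ⟨φ, h⟩ := h
  refine ⟨φ.not, fun S v => ?_⟩
  letI := memStructure S
  show _ ↔ ¬ R S v
  rw [← h, Language.Formula.realize_not]

theorem Df.imp {R Q : (S : Set ZFSet.{u}) → (ℕ → S) → Prop} (h : Df R) (h' : Df Q) :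
    Df fun S v => R S v → Q S v := by
  obtain ⟨φ, h⟩ := h
  obtain ⟨ψ, h'⟩ := h'
  refine ⟨φ.imp ψ, fun S v => ?_⟩
  letI := memStructure S
  show _ ↔ (R S v → Q S v)
  rw [← h, ← h', Language.Formula.realize_imp]

theorem Df.and {R Q : (S : Set ZFSet.{u}) → (ℕ → S) → Prop} (h : Df R) (h' : Df Q) :
    Df fun S v => R S v ∧ Q S v := by
  have := (h.imp h'.not).not
  simpa using this

theorem Df.or {R Q : (S : Set ZFSet.{u}) → (ℕ → S) → Prop} (h : Df R) (h' : Df Q) :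
    Df fun S v => R S v ∨ Q S v := by
  have := h.not.imp h'
  simpa [or_iff_not_imp_left] using this

theorem Df.iff {R Q : (S : Set ZFSet.{u}) → (ℕ → S) → Prop} (h : Df R) (h' : Df Q) :
    Df fun S v => (R S v ↔ Q S v) := by
  have := (h.imp h').and (h'.imp h)
  simpa [iff_def] using this

theorem Df.ex {Q : (S : Set ZFSet.{u}) → (ℕ → S) → S → Prop}
    (h : Df fun S v => Q S (fun n => v (n + 1)) (v 0)) :
    Df fun S v => ∃ x, Q S v x := by
  obtain ⟨φ, h⟩ := h
  refine ⟨(Language.BoundedFormula.relabel (n := 1) (k := 0)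
    (fun n : ℕ => Nat.casesOn n (Sum.inr 0) Sum.inl) φ).ex, fun S v => ?_⟩
  letI := memStructure S
  rw [Language.Formula.Realize, Language.BoundedFormula.realize_ex]
  refine exists_congr fun x => ?_
  have := h S (fun n : ℕ => Nat.casesOn n x v)
  refine Iff.trans ?_ this
  erw [Language.BoundedFormula.realize_relabel]
  rw [Language.Formula.Realize]
  refine iff_of_eq ?_
  congr 1
  · funext n
    cases n <;> rfl
  · exact Subsingleton.elim _ _

theorem Df.all {Q : (S : Set ZFSet.{u}) → (ℕ → S) → S → Prop}
    (h : Df fun S v => Q S (fun n => v (n + 1)) (v 0)) :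
    Df fun S v => ∀ x, Q S v x := by
  have := (Df.ex (Q := fun S v x => ¬ Q S v x) h.not).not
  simpa using this

/-- the assignment `a, b, c, c, …` -/
def asg {S : Set ZFSet.{u}} (a b c : S) : ℕ → S
  | 0 => a
  | 1 => b
  | _ => c

theorem Df.elem {R : (S : Set ZFSet.{u}) → (ℕ → S) → Prop} (h : Df R)
    {M N : Set ZFSet.{u}} (hMN : ElemSub M N) (a b c : M) :
    R M (asg a b c) ↔
    R N (asg ⟨a.1, hMN.1 a.2⟩ ⟨b.1, hMN.1 b.2⟩ ⟨c.1, hMN.1 c.2⟩) := by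
  obtain ⟨φ, h⟩ := h
  let g : ℕ → Fin 3
    | 0 => 0
    | 1 => 1
    | _ => 2
  have hM : ∀ i, (![a.1, b.1, c.1] : Fin 3 → ZFSet) i ∈ M := by
    intro i; fin_cases i
    exacts [a.2, b.2, c.2]
  have key := hMN.2 3 (φ.relabel g) ![a.1, b.1, c.1] hM (fun i => hMN.1 (hM i))
  rw [← h, ← h]
  rw [@Language.Formula.realize_relabel _ M (memStructure M),
    @Language.Formula.realize_relabel _ N (memStructure N)] at key
  convert key using 2
  · funext n; rcases n with _ | _ | n <;> rfl
  · funext n; rcases n with _ | _ | n <;> rfl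

/-- `(b, t) ∈ f` relativized to `S`. -/
def PairIn (S : Set ZFSet.{u}) (b t f : S) : Prop :=
  ∃ z : S, (z : ZFSet) ∈ (f : ZFSet) ∧ ∀ w : S, (w : ZFSet) ∈ (z : ZFSet) ↔
    ((∀ u : S, (u : ZFSet) ∈ (w : ZFSet) ↔ u = b) ∨
     (∀ u : S, (u : ZFSet) ∈ (w : ZFSet) ↔ (u = b ∨ u = t)))

theorem Df.pairIn (i j k : ℕ) : Df.{u} fun S v => PairIn S (v i) (v j) (v k) := by
  unfold PairIn
  refine Df.ex (Df.and (Df.mem _ _) (Df.all (Df.iff (Df.mem _ _) (Df.or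
    (Df.all (Df.iff (Df.mem _ _) (Df.eq _ _)))
    (Df.all (Df.iff (Df.mem _ _) (Df.or (Df.eq _ _) (Df.eq _ _))))))))

/-- `f` is functional, relativized to `S`. -/
def FuncIn (S : Set ZFSet.{u}) (f : S) : Prop :=
  ∀ b t t' : S, PairIn S b t f → PairIn S b t' f → t = t'

theorem Df.funcIn (i : ℕ) : Df.{u} fun S v => FuncIn S (v i) := by
  unfold FuncIn
  exact Df.all (Df.all (Df.all (Df.imp (Df.pairIn _ _ _) (Df.imp (Df.pairIn _ _ _)
    (Df.eq _ _)))))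

/-- ordinals, relativized to `S`. -/
def OrdIn (S : Set ZFSet.{u}) (b : S) : Prop :=
  (∀ x : S, (x : ZFSet) ∈ (b : ZFSet) → ∀ y : S, (y : ZFSet) ∈ (x : ZFSet) →
    (y : ZFSet) ∈ (b : ZFSet)) ∧
  (∀ y z w : S, (y : ZFSet) ∈ (z : ZFSet) → (z : ZFSet) ∈ (w : ZFSet) →
    (w : ZFSet) ∈ (b : ZFSet) → (y : ZFSet) ∈ (w : ZFSet))

theorem Df.ordIn (i : ℕ) : Df.{u} fun S v => OrdIn S (v i) := by
  unfold OrdIn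
  exact Df.and (Df.all (Df.imp (Df.mem _ _) (Df.all (Df.imp (Df.mem _ _) (Df.mem _ _)))))
    (Df.all (Df.all (Df.all (Df.imp (Df.mem _ _) (Df.imp (Df.mem _ _)
      (Df.imp (Df.mem _ _) (Df.mem _ _)))))))

/-- there is a functional relation from `b` onto `T`, relativized to `S` -/
def SurjIn (S : Set ZFSet.{u}) (b T : S) : Prop :=
  ∃ g : S, FuncIn S g ∧ ∀ s : S, (s : ZFSet) ∈ (T : ZFSet) →
    ∃ c : S, (c : ZFSet) ∈ (b : ZFSet) ∧ PairIn S c s g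

theorem Df.surjIn (i j : ℕ) : Df.{u} fun S v => SurjIn S (v i) (v j) := by
  unfold SurjIn
  exact Df.ex (Df.and (Df.funcIn _) (Df.all (Df.imp (Df.mem _ _)
    (Df.ex (Df.and (Df.mem _ _) (Df.pairIn _ _ _))))))

/-- `f` maps countable ordinals onto `T`, relativized to `S` -/
def EnumIn (S : Set ZFSet.{u}) (f T : S) : Prop :=
  FuncIn S f ∧ ∀ t : S, (t : ZFSet) ∈ (T : ZFSet) →
    ∃ b : S, PairIn S b t f ∧ OrdIn S b ∧ ¬ SurjIn S b T

theorem Df.enumIn (i j : ℕ) : Df.{u} fun S v => EnumIn S (v i) (v j) := by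
  unfold EnumIn
  exact Df.and (Df.funcIn _) (Df.all (Df.imp (Df.mem _ _)
    (Df.ex (Df.and (Df.pairIn _ _ _) (Df.and (Df.ordIn _) (Df.not (Df.surjIn _ _)))))))

theorem mem_unions_succ (n : ℕ) (x z : ZFSet.{u}) :
    z ∈ unions (n + 1) x ↔ ∃ y ∈ x, z ∈ unions n y := by
  induction n generalizing z with
  | zero => simp [unions]
  | succ n ih =>
    rw [unions, ZFSet.mem_sUnion]
    constructor
    · rintro ⟨w, hw, hz⟩
      obtain ⟨y, hy, hwy⟩ := (ih w).1 hw
      exact ⟨y, hy, by rw [unions, ZFSet.mem_sUnion]; exact ⟨w, hwy, hz⟩⟩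
    · rintro ⟨y, hy, hz⟩
      rw [unions, ZFSet.mem_sUnion] at hz
      obtain ⟨w, hw, hz⟩ := hz
      exact ⟨w, (ih w).2 ⟨y, hy, hw⟩, hz⟩

theorem tcl_eq (x : ZFSet.{u}) : tcl x = x.toSet ∪ ⋃ y : x.toSet, tcl y.1 := by
  ext z
  simp only [tcl, Set.mem_iUnion, Set.mem_union]
  constructor
  · rintro ⟨n, hn⟩
    cases n with
    | zero => exact Or.inl hn
    | succ n =>
      obtain ⟨y, hy, hz⟩ := (mem_unions_succ n x z).1 hn
      exact Or.inr ⟨⟨y, hy⟩, n, hz⟩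
  · rintro (h | ⟨⟨y, hy⟩, n, hz⟩)
    · exact ⟨0, h⟩
    · exact ⟨n + 1, (mem_unions_succ n x z).2 ⟨y, hy, hz⟩⟩

theorem HSet_trans {θ : Cardinal} {x y : ZFSet.{u}} (hx : x ∈ HSet θ) (hy : y ∈ x) :
    y ∈ HSet θ := by
  refine lt_of_le_of_lt (Cardinal.mk_le_mk_of_subset ?_) hx
  rw [tcl_eq x]
  exact fun z hz => Or.inr (Set.mem_iUnion.2 ⟨⟨y, hy⟩, hz⟩)

theorem HSet_of {θ : Cardinal} (hθ : θ.IsRegular) {x : ZFSet.{u}}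
    (hx : ∀ y ∈ x, y ∈ HSet θ) (hc : Cardinal.mk x.toSet < θ) : x ∈ HSet θ := by
  show Cardinal.mk (tcl x) < θ
  rw [tcl_eq]
  refine lt_of_le_of_lt (Cardinal.mk_union_le _ _) (Cardinal.add_lt_of_lt hθ.aleph0_le hc ?_)
  rw [Cardinal.card_iUnion_lt_iff_forall_of_isRegular hθ hc]
  exact fun y => hx y.1 y.2

theorem HSet_pair {θ : Cardinal} (hθ : θ.IsRegular) {x y : ZFSet.{u}}
    (hx : x ∈ HSet θ) (hy : y ∈ HSet θ) : ({x, y} : ZFSet) ∈ HSet θ := by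
  refine HSet_of hθ ?_ ?_
  · intro z hz
    rcases ZFSet.mem_pair.1 hz with rfl | rfl <;> assumption
  · refine lt_of_lt_of_le ?_ hθ.aleph0_le
    rw [Cardinal.lt_aleph0_iff_set_finite]
    refine (Set.toFinite {x, y}).subset fun z hz => ?_
    exact ZFSet.mem_pair.1 hz

theorem HSet_opair {θ : Cardinal} (hθ : θ.IsRegular) {x y : ZFSet.{u}}
    (hx : x ∈ HSet θ) (hy : y ∈ HSet θ) : ZFSet.pair x y ∈ HSet θ := by
  unfold ZFSet.pair
  have : ({x} : ZFSet) ∈ HSet θ := by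
    have := HSet_pair hθ hx hx
    simpa using this
  exact HSet_pair hθ this (HSet_pair hθ hx hy)

theorem pairIn_iff {θ : Cardinal} (hθ : θ.IsRegular) (b t f : HSet.{u} θ) :
    PairIn (HSet θ) b t f ↔ ZFSet.pair b.1 t.1 ∈ f.1 := by
  have h1 : ∀ w : HSet.{u} θ, (∀ u : HSet.{u} θ, (u : ZFSet) ∈ (w : ZFSet) ↔ u = b) ↔
      w.1 = {b.1} := by
    intro w
    constructor
    · intro h
      ext u
      rw [ZFSet.mem_singleton]
      constructor
      · intro hu
        exact congrArg Subtype.val ((h ⟨u, HSet_trans w.2 hu⟩).1 hu)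
      · rintro rfl
        exact (h b).2 rfl
    · intro h u
      rw [h, ZFSet.mem_singleton, Subtype.ext_iff]
  have h2 : ∀ w : HSet.{u} θ, (∀ u : HSet.{u} θ, (u : ZFSet) ∈ (w : ZFSet) ↔
      (u = b ∨ u = t)) ↔ w.1 = {b.1, t.1} := by
    intro w
    constructor
    · intro h
      ext u
      rw [ZFSet.mem_pair]
      constructor
      · intro hu
        exact ((h ⟨u, HSet_trans w.2 hu⟩).1 hu).imp (congrArg Subtype.val) (congrArg Subtype.val)
      · rintro (rfl | rfl)
        · exact (h b).2 (Or.inl rfl)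
        · exact (h t).2 (Or.inr rfl)
    · intro h u
      rw [h, ZFSet.mem_pair, Subtype.ext_iff, Subtype.ext_iff]
  have hs : ({b.1} : ZFSet) ∈ HSet θ := by
    have := HSet_pair hθ b.2 b.2
    simpa using this
  unfold PairIn
  simp only [h1, h2]
  constructor
  · rintro ⟨z, hz, h⟩
    have : z.1 = ZFSet.pair b.1 t.1 := by
      ext w
      unfold ZFSet.pair
      rw [ZFSet.mem_pair]
      constructor
      · intro hw
        exact (h ⟨w, HSet_trans z.2 hw⟩).1 hw
      · rintro (rfl | rfl)
        · exact (h ⟨_, hs⟩).2 (Or.inl rfl)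
        · exact (h ⟨_, HSet_pair hθ b.2 t.2⟩).2 (Or.inr rfl)
    rwa [← this]
  · intro h
    refine ⟨⟨_, HSet_opair hθ b.2 t.2⟩, h, fun w => ?_⟩
    simp only [ZFSet.pair, ZFSet.mem_pair]

theorem ordIn_iff {θ : Cardinal} (b : HSet.{u} θ) : OrdIn (HSet θ) b ↔ b.1.IsOrdinal := by
  constructor
  · rintro ⟨h1, h2⟩
    refine ⟨fun x hx y hy => ?_, fun {y z w} hy hz hw => ?_⟩
    · have hx' := HSet_trans b.2 hx
      exact h1 ⟨x, hx'⟩ hx ⟨y, HSet_trans hx' hy⟩ hy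
    · have hw' := HSet_trans b.2 hw
      have hz' := HSet_trans hw' hz
      exact h2 ⟨y, HSet_trans hz' hy⟩ ⟨z, hz'⟩ ⟨w, hw'⟩ hy hz hw
  · intro h
    exact ⟨fun x hx y hy => h.mem_trans hy hx, fun y z w hy hz hw => h.mem_trans' hy hz hw⟩

/-- the graph of the inverse of an injection on `T` belongs to `H_θ` -/
theorem exists_graph {θ : Cardinal} (hθ : θ.IsRegular) (T : HSet.{u} θ)
    (hT : Cardinal.mk T.1.toSet < θ) (e : T.1.toSet → ZFSet.{u}) (he : Function.Injective e)
    (heH : ∀ t, e t ∈ HSet θ) :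
    ∃ g : HSet.{u} θ, FuncIn (HSet θ) g ∧
      ∀ t : T.1.toSet, ZFSet.pair (e t) t.1 ∈ g.1 := by
  have : Small.{u} T.1.toSet := ZFSet.small_coe T.1
  let g : ZFSet.{u} := ZFSet.range (fun t : T.1.toSet => ZFSet.pair (e t) t.1)
  have hg : g ∈ HSet θ := by
    refine HSet_of hθ ?_ ?_
    · intro y hy
      obtain ⟨t, rfl⟩ := ZFSet.mem_range.1 hy
      exact HSet_opair hθ (heH t) (HSet_trans T.2 t.2)
    · refine lt_of_le_of_lt ?_ hT
      refine le_trans (Cardinal.mk_le_mk_of_subset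
        (t := Set.range (fun t : T.1.toSet => ZFSet.pair (e t) t.1)) ?_) Cardinal.mk_range_le
      intro y hy
      exact ZFSet.mem_range.1 hy
  refine ⟨⟨g, hg⟩, ?_, fun t => ZFSet.mem_range.2 ⟨t, rfl⟩⟩
  intro b t t' h h'
  rw [pairIn_iff hθ] at h h'
  obtain ⟨s, hs⟩ := ZFSet.mem_range.1 h
  obtain ⟨s', hs'⟩ := ZFSet.mem_range.1 h'
  obtain ⟨h1, h2⟩ := ZFSet.pair_injective hs
  obtain ⟨h3, h4⟩ := ZFSet.pair_injective hs'
  have := he (h1.trans h3.symm)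
  subst this
  exact Subtype.ext (h2.symm.trans h4)

theorem surjIn_iff {θ : Cardinal} (hθ : θ.IsRegular) (b T : HSet.{u} θ)
    (hT : Cardinal.mk T.1.toSet < θ) :
    SurjIn (HSet θ) b T ↔ Cardinal.mk T.1.toSet ≤ Cardinal.mk b.1.toSet := by
  constructor
  · rintro ⟨g, hg, h⟩
    choose c hc hcg using fun s : T.1.toSet => h ⟨s.1, HSet_trans T.2 s.2⟩ s.2
    refine Cardinal.mk_le_of_injective (f := fun s => (⟨(c s).1, hc s⟩ : b.1.toSet)) ?_
    intro s s' hss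
    have h1 : c s = c s' := Subtype.ext (Subtype.mk.inj hss)
    have h2 := hcg s
    rw [h1] at h2
    have h3 := hg _ _ _ h2 (hcg s')
    exact Subtype.ext (Subtype.mk.inj h3)
  · intro h
    obtain ⟨e⟩ := Cardinal.le_def _ _ |>.1 h
    obtain ⟨g, hg, hg'⟩ := exists_graph hθ T hT (fun t => (e t).1)
      (Subtype.val_injective.comp e.injective) (fun t => HSet_trans b.2 (e t).2)
    refine ⟨g, hg, fun s hs => ⟨⟨_, HSet_trans b.2 (e ⟨s.1, hs⟩).2⟩, (e ⟨s.1, hs⟩).2, ?_⟩⟩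
    rw [pairIn_iff hθ]
    exact hg' ⟨s.1, hs⟩

theorem ctble_toZFSet (o : Ordinal.{u}) (ho : o < Ordinal.omega 1) : Ctble o.toZFSet := by
  have h : (o.toZFSet).toSet = Ordinal.toZFSet '' Set.Iio o := Ordinal.coe_toZFSet
  unfold Ctble
  rw [h]
  refine Set.Countable.image ?_ _
  rw [← Cardinal.le_aleph0_iff_set_countable, Cardinal.mk_Iio_ordinal, Cardinal.lift_le_aleph0]
  have : o.card < Cardinal.aleph 1 := by
    rw [← Cardinal.lt_ord, Cardinal.ord_aleph]; exact ho
  rwa [← Cardinal.succ_aleph0, Order.lt_succ_iff] at this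

theorem toZFSet_mem_HSet {θ : Cardinal} (hθ : θ.IsRegular) (h2 : Cardinal.aleph 2 ≤ θ)
    (o : Ordinal.{u}) (ho : o < Ordinal.omega 1) : o.toZFSet ∈ HSet.{u} θ := by
  induction o using WellFoundedLT.induction with
  | _ o ih =>
    refine HSet_of hθ ?_ ?_
    · intro y hy
      obtain ⟨a, ha, rfl⟩ := Ordinal.mem_toZFSet_iff.1 hy
      exact ih a ha (ha.trans ho)
    · refine lt_of_le_of_lt (Cardinal.le_aleph0_iff_set_countable.2 (ctble_toZFSet o ho))
        (lt_of_lt_of_le ?_ h2)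
      rw [← Cardinal.aleph_zero]
      exact Cardinal.aleph_lt_aleph.2 (by norm_num)

theorem exists_enum {θ : Cardinal} (hθ : θ.IsRegular) (h2 : Cardinal.aleph 2 ≤ θ)
    (T : HSet.{u} θ) (hT : Cardinal.mk T.1.toSet = Cardinal.aleph 1) :
    ∃ f, EnumIn (HSet θ) f T := by
  have hTθ : Cardinal.mk T.1.toSet < θ := by
    rw [hT]
    exact lt_of_lt_of_le (Cardinal.aleph_lt_aleph.2 (by norm_num)) h2
  have : Cardinal.mk T.1.toSet ≤ Cardinal.mk (Set.Iio (Ordinal.omega.{u} 1)) := by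
    rw [hT, Cardinal.mk_Iio_ordinal]
    simp
  obtain ⟨e⟩ := Cardinal.le_def _ _ |>.1 this
  obtain ⟨f, hf, hf'⟩ := exists_graph hθ T hTθ (fun t => (e t).1.toZFSet)
    (Ordinal.toZFSet_injective.comp (Subtype.val_injective.comp e.injective))
    (fun t => toZFSet_mem_HSet hθ h2 _ (e t).2)
  refine ⟨f, hf, fun t ht => ⟨⟨_, toZFSet_mem_HSet hθ h2 _ (e ⟨t.1, ht⟩).2⟩, ?_, ?_, ?_⟩⟩
  · rw [pairIn_iff hθ]
    exact hf' ⟨t.1, ht⟩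
  · rw [ordIn_iff]
    exact ZFSet.isOrdinal_toZFSet _
  · rw [surjIn_iff hθ _ _ hTθ, hT, not_le]
    refine lt_of_le_of_lt (Cardinal.le_aleph0_iff_set_countable.2
      (ctble_toZFSet _ (e ⟨t.1, ht⟩).2)) ?_
    exact Cardinal.aleph0_lt_aleph_one

theorem subset_of_elem {θ : Cardinal} (hθ : θ.IsRegular) (h2 : Cardinal.aleph 2 ≤ θ)
    {M T : ZFSet.{u}} (hM : ElemSub M.toSet (HSet θ)) (hT : T ∈ M) (hω : Omega1Sub M)
    (hsize : Cardinal.mk T.toSet = Cardinal.aleph 1) : ∀ t ∈ T, t ∈ M := by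
  have hTθ : Cardinal.mk T.toSet < θ := by
    rw [hsize]
    exact lt_of_lt_of_le (Cardinal.aleph_lt_aleph.2 (by norm_num)) h2
  have d1 : Df.{u} fun S v => ∃ f, EnumIn S f (v 0) := Df.ex (Df.enumIn _ _)
  let T' : M.toSet := ⟨T, hT⟩
  let TN : HSet θ := ⟨T, hM.1 hT⟩
  obtain ⟨f, hf⟩ := (d1.elem hM T' T' T').2 (exists_enum hθ h2 TN hsize)
  let fN : HSet θ := ⟨f.1, hM.1 f.2⟩
  have hf : EnumIn (HSet θ) fN TN := ((Df.enumIn 0 1).elem hM f T' T').1 hf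
  obtain ⟨hfun, hf⟩ := hf
  intro t ht
  obtain ⟨b, hb, hbo, hbs⟩ := hf ⟨t, HSet_trans (hM.1 hT) ht⟩ ht
  rw [ordIn_iff] at hbo
  rw [surjIn_iff hθ _ TN hTθ, not_le] at hbs
  have hbM : b.1 ∈ M := by
    refine hω _ hbo ?_
    change Cardinal.mk b.1.toSet < Cardinal.mk T.toSet at hbs
    rw [hsize, ← Cardinal.succ_aleph0, Order.lt_succ_iff] at hbs
    exact Cardinal.le_aleph0_iff_set_countable.1 hbs
  have d2 : Df.{u} fun S v => ∃ t, PairIn S (v 0) t (v 1) := Df.ex (Df.pairIn _ _ _)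
  let b' : M.toSet := ⟨b.1, hbM⟩
  obtain ⟨t', ht'⟩ := (d2.elem hM b' f f).2 ⟨_, hb⟩
  have h3 : PairIn (HSet θ) b ⟨t'.1, hM.1 t'.2⟩ fN :=
    ((Df.pairIn 0 1 2).elem hM b' t' f).1 ht'
  have h4 := hfun _ _ _ hb h3
  have h5 : t = t'.1 := Subtype.mk.inj h4
  rw [h5]
  exact t'.2

/-- If `(T, <_T)` is a tree of height and size `ω₁`, then the forcing
notion `(T, ≥_T)` is proper for models of size `ω₁`. -/
theorem tree_forcing_proper_for_size_omega1 (T lt : ZFSet) (htree : IsTree T lt)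
    (hsize : Cardinal.mk ↥T.toSet = Cardinal.aleph 1) (hheight : HeightOmega1 T lt) :
    ProperForSizeOmega1 T (revLe T lt) := by
  refine ⟨Cardinal.aleph 2, fun θ h2 hθ => ?_⟩
  rintro M ⟨hM, hT, -, hω, -⟩ p hpM hpT
  have hsub := subset_of_elem hθ h2 hM hT hω hsize
  have hrefl : ∀ r ∈ T, Le (revLe T lt) r r := by
    intro r hr
    unfold Le revLe
    rw [ZFSet.mem_sep]
    refine ⟨?_, r, hr, r, hr, rfl, Or.inl rfl⟩
    rw [ZFSet.mem_powerset]
    intro x hx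
    rw [ZFSet.mem_powerset]
    intro y hy
    have : y = r := by
      rcases ZFSet.mem_pair.1 hx with rfl | rfl <;> simpa using hy
    exact this ▸ hr
  refine ⟨p, hpT, hrefl p hpT, ?_⟩
  intro D hD _ r hr _
  obtain ⟨s, hs, hsr⟩ := hD.2 r hr
  exact ⟨s, ⟨hsub s (hD.1 hs), hs⟩, s, hD.1 hs, hrefl s (hD.1 hs), hsr⟩

end GuessingPaper
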